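/- There is a constant κ > 0 such that for all sufficiently large n the following holds: every 3-edge-colouring of K_n with colours {1,2,3} that contains no rainbow triangle (no three vertices whose three pairs receive three distinct colours) has a homogeneous set of size at least κ·n^{1/3}·(log n)^2. -/

import Mathlib

/-!
For a vertex set `S` and a colour `k` let `hom c k S` be the largest size of a subset of `S` on which
colour `k` is absent. If every homogeneous set had fewer than `M = κ n^{1/3} (log n)^2` vertices, the
product of the three numbers `hom c k univ` would be below `M^3 = κ^3 n (log n)^6`. The proof derives
the opposite bound by showing, by induction on `S`, that
`∏ k, hom c k S ≥ |S| * pot w (log |S|)` (`card_mul_pot_le`), where `w = log n / 15` and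
`pot w (log n)` is of order `(log n)^6`.

*Structure.* In a colouring without rainbow triangles some colour `i` is disconnected on `S`
(`exists_disconnected`), and its components are blocks between which only one colour, different
from `i`, occurs (`exists_gallai_partition`). Over the blocks `D`, `hom c i` is superadditive, while
for the two other colours only the sums over monochromatic cliques of the quotient are controlled.
With `X D = hom c (i + 2) S / hom c (i + 2) D`, `Y D = hom c (i + 1) S / hom c (i + 1) D` and
`r D = X D * Y D`, the inductive step reduces to
`∑ D, q D * r D * g D ≥ 1`, where `q D = |D| / |S|` and `g D = pot (log |D|) / pot (log |S|)`.

*Ramsey input.* The off-diagonal Erdős–Szekeres bound and `choose (s + t) s ≤ exp (2 √(s t))` show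
that few blocks have small `r D`: `∑ D, exp (-3 √(r D)) ≤ 96` (`sum_exp_neg_le`). So, apart from a
set of negligible total weight, `log (1 / q D) ≤ 23 √(r D)`, and then the gain `r D` outweighs the
loss `g D ≥ (1 + log (1 / q D) / 552) ^ (-2)` (`core_sum_ge`). At most one block has `r D < 2`; it is
treated separately, using that the closer its `r` is to `1`, the larger the other `r D` are.

*Potential.* `pot w` is the square of a product of three ramps, each growing from `1` to `1 + w / 552`
on an interval of length `w`, with flat stretches of length `6 w = (2 / 5) log n` in between. Two
numbers at distance at most `6 w` therefore see at most one ramp, which gives the bound on `g D` as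
soon as `q D ≥ n^{-2/5}`. The blocks violating this are negligible in total, because there are at most
`hom c i S ≤ M = n^{1/3 + o(1)}` blocks.
-/

/-- A set `X` is homogeneous for a 3-edge-colouring `c` of `K_n`
if some colour does not appear on pairs of distinct elements of `X`. -/
def IsHomog {n : ℕ} (c : Sym2 (Fin n) → Fin 3) (X : Finset (Fin n)) : Prop :=
  ∃ i : Fin 3, ∀ x ∈ X, ∀ y ∈ X, x ≠ y → c s(x, y) ≠ i

/-- `c` contains a rainbow triangle: three vertices whose three pairs
receive three pairwise distinct colours. -/
def HasRainbowTriangle {n : ℕ} (c : Sym2 (Fin n) → Fin 3) : Prop :=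
  ∃ x y z : Fin n, x ≠ y ∧ y ≠ z ∧ x ≠ z ∧
    c s(x, y) ≠ c s(y, z) ∧ c s(y, z) ≠ c s(x, z) ∧ c s(x, y) ≠ c s(x, z)

open Finset

/-! ### Weighted off-diagonal Ramsey bounds -/

/-- Erdős–Szekeres: if all `R`-cliques in `S` have at most `s` elements and all `R`-independent
subsets at most `t`, then `|S| < choose (s + t) s`. -/
theorem card_succ_le_choose {ι : Type*} (R : ι → ι → Prop) (hR : ∀ x y, R x y → R y x) :
    ∀ (m s t : ℕ), s + t = m → ∀ S : Finset ι,
      (∀ J ⊆ S, (J : Set ι).Pairwise R → J.card ≤ s) →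
      (∀ J ⊆ S, (J : Set ι).Pairwise (fun x y => ¬ R x y) → J.card ≤ t) →
      S.card + 1 ≤ (s + t).choose s := by
  classical
  intro m
  induction m with
  | zero =>
    intro s t hst S h1 h2
    rcases S.eq_empty_or_nonempty with rfl | ⟨v, hv⟩
    · simpa using Nat.succ_le_of_lt (Nat.choose_pos (Nat.le_add_right s t))
    · have := h1 {v} (by simpa using hv) (by simp)
      simp at this
      omega
  | succ m ih =>
    intro s t hst S h1 h2
    rcases S.eq_empty_or_nonempty with rfl | ⟨v, hv⟩
    · simpa using Nat.succ_le_of_lt (Nat.choose_pos (Nat.le_add_right s t))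
    have hs := h1 {v} (by simpa using hv) (by simp)
    have ht := h2 {v} (by simpa using hv) (by simp)
    rw [card_singleton] at hs ht
    obtain ⟨s, rfl⟩ : ∃ s', s = s' + 1 := ⟨s - 1, by omega⟩
    obtain ⟨t, rfl⟩ : ∃ t', t = t' + 1 := ⟨t - 1, by omega⟩
    have e1 := ih s (t + 1) (by omega) ((S.erase v).filter (R v))
      (by
        intro J hJ hp
        have hvJ : v ∉ J := fun h => by simpa using hJ h
        have := h1 (insert v J) (by
          intro x hx
          rcases mem_insert.1 hx with rfl | hx
          · exact hv
          · exact (mem_erase.1 (mem_filter.1 (hJ hx)).1).2) (by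
          rw [coe_insert]
          refine hp.insert fun b hb _ => ?_
          have := (mem_filter.1 (hJ hb)).2
          exact ⟨this, hR _ _ this⟩)
        rw [card_insert_of_notMem hvJ] at this
        omega)
      (fun J hJ hp => h2 J (hJ.trans ((filter_subset _ _).trans (erase_subset _ _))) hp)
    have e2 := ih (s + 1) t (by omega) ((S.erase v).filter (fun x => ¬ R v x))
      (fun J hJ hp => h1 J (hJ.trans ((filter_subset _ _).trans (erase_subset _ _))) hp)
      (by
        intro J hJ hp
        have hvJ : v ∉ J := fun h => by simpa using hJ h
        have := h2 (insert v J) (by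
          intro x hx
          rcases mem_insert.1 hx with rfl | hx
          · exact hv
          · exact (mem_erase.1 (mem_filter.1 (hJ hx)).1).2) (by
          rw [coe_insert]
          refine hp.insert fun b hb _ => ?_
          have := (mem_filter.1 (hJ hb)).2
          exact ⟨this, fun h => this (hR _ _ h)⟩)
        rw [card_insert_of_notMem hvJ] at this
        omega)
    have e3 := card_filter_add_card_filter_not (s := S.erase v) (R v)
    have e4 := card_erase_add_one hv
    have e5 : (s + 1 + (t + 1)).choose (s + 1) =
        (s + (t + 1)).choose s + (s + 1 + t).choose (s + 1) := by
      have : s + 1 + (t + 1) = (s + (t + 1)) + 1 := by ring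
      rw [this, Nat.choose_succ_succ]
      congr 2
      ring
    omega

theorem one_add_sq_le_exp {y : ℝ} (hy : 0 ≤ y) : 1 + y ^ 2 ≤ Real.exp y := by
  have := Real.sum_le_exp_of_nonneg hy 4
  simp [Finset.sum_range_succ, Nat.factorial] at this
  nlinarith [mul_nonneg hy (sq_nonneg (y - 3 / 2))]

/-- Follows from `choose (s + t) s * s ^ s * t ^ t ≤ (s + t) ^ (s + t)` and `1 + z ≤ exp √z`. Unlike
`2 ^ (s + t)`, this is strong enough when `s` and `t` are far apart. -/
theorem choose_le_exp (s t : ℕ) (hs : 1 ≤ s) (ht : 1 ≤ t) :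
    ((s + t).choose s : ℝ) ≤ Real.exp (2 * √((s : ℝ) * t)) := by
  have hs' : (0 : ℝ) < s := by exact_mod_cast hs
  have ht' : (0 : ℝ) < t := by exact_mod_cast ht
  have h1 : ((s + t).choose s : ℝ) * ((s : ℝ) ^ s * (t : ℝ) ^ t) ≤ ((s : ℝ) + t) ^ (s + t) := by
    rw [add_pow]
    have := Finset.single_le_sum (f := fun m => (s : ℝ) ^ m * (t : ℝ) ^ (s + t - m) *
      ((s + t).choose m : ℝ)) (s := range (s + t + 1)) (a := s)
      (fun i _ => by positivity) (by simp)
    simp only [Nat.add_sub_cancel_left] at this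
    linarith
  have key : ∀ a b : ℕ, 1 ≤ a → 1 ≤ b →
      ((a : ℝ) + b) ^ a ≤ (a : ℝ) ^ a * Real.exp (√((a : ℝ) * b)) := by
    intro a b ha hb
    have ha' : (0 : ℝ) < a := by exact_mod_cast ha
    have hb' : (0 : ℝ) < b := by exact_mod_cast hb
    have h := one_add_sq_le_exp (Real.sqrt_nonneg ((b : ℝ) / a))
    rw [Real.sq_sqrt (by positivity)] at h
    have e : (a : ℝ) * √((b : ℝ) / a) = √((a : ℝ) * b) := by
      rw [show (a : ℝ) * b = a ^ 2 * (b / a) by field_simp,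
        Real.sqrt_mul (by positivity), Real.sqrt_sq ha'.le]
    rw [← e, Real.exp_nat_mul, ← mul_pow]
    refine pow_le_pow_left₀ (by positivity) ?_ _
    calc (a : ℝ) + b = a * (1 + b / a) := by field_simp
      _ ≤ _ := by gcongr
  have k1 := key s t hs ht
  have k2 := key t s ht hs
  have h2 : ((s : ℝ) + t) ^ (s + t) ≤
      ((s : ℝ) ^ s * (t : ℝ) ^ t) * Real.exp (2 * √((s : ℝ) * t)) := by
    rw [pow_add, two_mul, Real.exp_add]
    rw [add_comm (t : ℝ), mul_comm (t : ℝ)] at k2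
    calc _ ≤ _ := mul_le_mul k1 k2 (by positivity) (by positivity)
      _ = _ := by ring
  have h3 := h1.trans h2
  rw [mul_comm] at h3
  exact le_of_mul_le_mul_left h3 (by positivity)

theorem exp_neg_le_div {z : ℝ} (hz : 0 < z) : Real.exp (-z) ≤ 24 / z ^ 4 := by
  rw [Real.exp_neg, inv_eq_one_div, div_le_div_iff₀ (Real.exp_pos _) (by positivity)]
  have := Real.pow_div_factorial_le_exp z hz.le 4
  simp [Nat.factorial] at this
  linarith

theorem sum_inv_sq_le (K : Finset ℕ) (hK : ∀ k ∈ K, 1 ≤ k) :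
    ∑ k ∈ K, (((k : ℝ)) ^ 2)⁻¹ ≤ 2 := by
  have h := sum_Ioo_inv_sq_le (α := ℝ) 0 (K.sup id + 1)
  refine (Finset.sum_le_sum_of_subset_of_nonneg (fun k hk => ?_) fun _ _ _ => by positivity).trans
    (h.trans (by norm_num))
  rw [mem_Ioo]
  exact ⟨hK k hk, Nat.lt_succ_of_le (Finset.le_sup (f := id) hk)⟩

theorem one_le_floor_aux {x : ℝ} (h : 1 ≤ x) : 1 ≤ ⌊x⌋₊ := Nat.le_floor (by simpa using h)

/-- Weighted Ramsey bound: if the weights `1 / x` sum to at most `1` on every `R`-clique and the weights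
`1 / y` on every independent set, then few indices have a small product `x j * y j`. The indices with
`⌊x j⌋ = k` and `⌊y j⌋ = l` contain no clique of size `k + 1` and no independent set of size `l + 1`,
so there are at most `exp (2 √(k l))` of them. -/
theorem sum_exp_neg_le {ι : Type*} (R : ι → ι → Prop) (hR : ∀ x y, R x y → R y x)
    (I : Finset ι) (x y : ι → ℝ) (hx : ∀ j ∈ I, 1 ≤ x j) (hy : ∀ j ∈ I, 1 ≤ y j)
    (h1 : ∀ J ⊆ I, (J : Set ι).Pairwise R → ∑ j ∈ J, (x j)⁻¹ ≤ 1)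
    (h2 : ∀ J ⊆ I, (J : Set ι).Pairwise (fun a b => ¬ R a b) → ∑ j ∈ J, (y j)⁻¹ ≤ 1) :
    ∑ j ∈ I, Real.exp (-(3 * √(x j * y j))) ≤ 96 := by
  classical
  set φ : ι → ℕ × ℕ := fun j => (⌊x j⌋₊, ⌊y j⌋₊) with hφ
  set P := (I.image fun j => ⌊x j⌋₊) ×ˢ (I.image fun j => ⌊y j⌋₊) with hP
  have hclass : ∀ (z : ι → ℝ) (k : ℕ) (J : Finset ι), J ⊆ I → (∀ j ∈ I, 1 ≤ z j) →
      (∀ j ∈ J, ⌊z j⌋₊ = k) → ∑ j ∈ J, (z j)⁻¹ ≤ 1 → J.card ≤ k := by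
    intro z k J hJ hz hk hs
    rcases J.eq_empty_or_nonempty with rfl | hne
    · simp
    have : (J.card : ℝ) * ((k : ℝ) + 1)⁻¹ < 1 := by
      refine lt_of_lt_of_le ?_ hs
      rw [← nsmul_eq_mul, ← Finset.sum_const]
      refine Finset.sum_lt_sum_of_nonempty hne fun j hj => ?_
      have h0 : 0 < z j := by linarith [hz j (hJ hj)]
      refine (inv_lt_inv₀ (by positivity) h0).2 ?_
      rw [← hk j hj]
      exact Nat.lt_floor_add_one _
    rw [mul_inv_lt_iff₀ (by positivity), one_mul] at this
    have : J.card < k + 1 := by exact_mod_cast this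
    omega
  have hmaps : ∀ j ∈ I, φ j ∈ P := fun j hj =>
    mem_product.2 ⟨mem_image_of_mem _ hj, mem_image_of_mem _ hj⟩
  rw [← Finset.sum_fiberwise_of_maps_to hmaps]
  have hpos : ∀ p ∈ P, 1 ≤ p.1 ∧ 1 ≤ p.2 := by
    intro p hp
    obtain ⟨h, h'⟩ := mem_product.1 hp
    obtain ⟨j, hj, e⟩ := mem_image.1 h
    obtain ⟨j', hj', e'⟩ := mem_image.1 h'
    exact ⟨e ▸ one_le_floor_aux (hx j hj), e' ▸ one_le_floor_aux (hy j' hj')⟩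
  calc _ ≤ ∑ p ∈ P, 24 * (((p.1 : ℝ) ^ 2)⁻¹ * ((p.2 : ℝ) ^ 2)⁻¹) := by
        refine Finset.sum_le_sum fun p hp => ?_
        obtain ⟨p1, p2⟩ := hpos p hp
        have p1' : (1 : ℝ) ≤ p.1 := by exact_mod_cast p1
        have p2' : (1 : ℝ) ≤ p.2 := by exact_mod_cast p2
        have hsub : I.filter (fun j => φ j = p) ⊆ I := filter_subset _ _
        have hc := card_succ_le_choose R hR _ p.1 p.2 rfl (I.filter fun j => φ j = p)
          (fun J hJ hp => hclass x _ J (hJ.trans hsub) hx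
            (fun j hj => congrArg Prod.fst (mem_filter.1 (hJ hj)).2) (h1 J (hJ.trans hsub) hp))
          (fun J hJ hp => hclass y _ J (hJ.trans hsub) hy
            (fun j hj => congrArg Prod.snd (mem_filter.1 (hJ hj)).2) (h2 J (hJ.trans hsub) hp))
        have hc' : ((I.filter fun j => φ j = p).card : ℝ) ≤ Real.exp (2 * √((p.1 : ℝ) * p.2)) := by
          refine le_trans ?_ (choose_le_exp p.1 p.2 p1 p2)
          exact_mod_cast (Nat.le_succ _).trans hc
        have hz : 0 < √((p.1 : ℝ) * p.2) := Real.sqrt_pos.2 (by positivity)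
        calc _ ≤ ∑ j ∈ I with φ j = p, Real.exp (-(3 * √((p.1 : ℝ) * p.2))) := by
              refine Finset.sum_le_sum fun j hj => ?_
              obtain ⟨hj, e⟩ := mem_filter.1 hj
              have e1 : (p.1 : ℝ) ≤ x j := by
                rw [← e]; exact Nat.floor_le (by linarith [hx j hj])
              have e2 : (p.2 : ℝ) ≤ y j := by
                rw [← e]; exact Nat.floor_le (by linarith [hy j hj])
              have : √((p.1 : ℝ) * p.2) ≤ √(x j * y j) := by
                have := hx j hj
                gcongr
              exact Real.exp_le_exp.2 (by linarith)
          _ = ((I.filter fun j => φ j = p).card : ℝ) * Real.exp (-(3 * √((p.1 : ℝ) * p.2))) := by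
              rw [Finset.sum_const, nsmul_eq_mul]
          _ ≤ Real.exp (2 * √((p.1 : ℝ) * p.2)) * Real.exp (-(3 * √((p.1 : ℝ) * p.2))) := by
              gcongr
          _ = Real.exp (-√((p.1 : ℝ) * p.2)) := by rw [← Real.exp_add]; ring_nf
          _ ≤ 24 / √((p.1 : ℝ) * p.2) ^ 4 := exp_neg_le_div hz
          _ = _ := by
              rw [show √((p.1 : ℝ) * p.2) ^ 4 = (√((p.1 : ℝ) * p.2) ^ 2) ^ 2 by ring,
                Real.sq_sqrt (by positivity)]
              field_simp
    _ = 24 * ((∑ k ∈ I.image fun j => ⌊x j⌋₊, ((k : ℝ) ^ 2)⁻¹) *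
          ∑ l ∈ I.image fun j => ⌊y j⌋₊, ((l : ℝ) ^ 2)⁻¹) := by
        rw [Finset.sum_mul_sum, ← Finset.sum_product', Finset.mul_sum]
    _ ≤ 24 * (2 * 2) := by
        have a1 := sum_inv_sq_le (I.image fun j => ⌊x j⌋₊) (by
          intro k hk; obtain ⟨j, hj, rfl⟩ := mem_image.1 hk; exact one_le_floor_aux (hx j hj))
        have a2 := sum_inv_sq_le (I.image fun j => ⌊y j⌋₊) (by
          intro k hk; obtain ⟨j, hj, rfl⟩ := mem_image.1 hk; exact one_le_floor_aux (hy j hj))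
        have : 0 ≤ ∑ l ∈ I.image fun j => ⌊y j⌋₊, ((l : ℝ) ^ 2)⁻¹ :=
          Finset.sum_nonneg fun _ _ => by positivity
        gcongr
    _ = 96 := by norm_num


/-! ### The analytic inequality behind the inductive step -/

/-- When all `r j` are at least `R ≥ 2`, the terms with `r j * g j < 16 / 9` are negligible. Such a
term has `q j < exp (-23 √(r j))`, and the total of these bounds is at most `1 / (80 R)`, or
`q j < exp (-T)` and `r j < 2 F`, with total at most `η`. -/
theorem light_sum_ge {ι : Type*} (J : Finset ι) (q r g : ι → ℝ) (T F η R e : ℝ)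
    (hq : ∀ j ∈ J, 0 < q j) (hq1 : ∀ j ∈ J, q j ≤ 1)
    (hR : 2 ≤ R) (hr : ∀ j ∈ J, R ≤ r j)
    (hF : 0 < F)
    (hg : ∀ j ∈ J, 1 / F ≤ g j)
    (hg' : ∀ j ∈ J, -Real.log (q j) ≤ T → 1 / (1 + (1 / 552) * (-Real.log (q j))) ^ 2 ≤ g j)
    (hcount : ∑ j ∈ J, Real.exp (-(3 * √(r j))) ≤ 96)
    (hη : (J.card : ℝ) * Real.exp (-T) ≤ η) (he : 0 ≤ e) (heη : R < 2 * F → η ≤ e) :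
    16 / 9 * (∑ j ∈ J, q j - 1 / (80 * R) - e) ≤ ∑ j ∈ J, q j * r j * g j := by
  classical
  have hterm : ∀ j ∈ J, 16 / 9 * (q j - Real.exp (-(23 * √(r j))) -
      (if R < 2 * F then Real.exp (-T) else 0)) ≤ q j * r j * g j := by
    intro j hj
    have q0 := hq j hj
    have rj := hr j hj
    have r0 : 0 < r j := by linarith
    have hgj := hg j hj
    have gpos : 0 < g j := lt_of_lt_of_le (by positivity) hgj
    have E0 := Real.exp_pos (-(23 * √(r j)))
    have ET := Real.exp_pos (-T)
    by_cases hgood : 16 / 9 ≤ r j * g j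
    · have : 0 ≤ (if R < 2 * F then Real.exp (-T) else 0) := by split_ifs <;> positivity
      nlinarith
    have hnn : 0 ≤ q j * r j * g j := by positivity
    refine le_trans ?_ hnn
    push Not at hgood
    by_cases hT : -Real.log (q j) ≤ T
    · have hl : 0 ≤ -Real.log (q j) := by
        have := Real.log_nonpos q0.le (hq1 j hj); linarith
      set t := -Real.log (q j) with ht
      have h1 := hg' j hj hT
      have h2 : r j < 16 / 9 * (1 + 1 / 552 * t) ^ 2 := by
        have hp : 0 < (1 + 1 / 552 * t) ^ 2 := by positivity
        rw [div_le_iff₀ hp] at h1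
        nlinarith
      have h3 : √(r j) < 4 / 3 * (1 + 1 / 552 * t) := by
        rw [Real.sqrt_lt' (by positivity)]
        nlinarith
      have h4 : (1.414 : ℝ) ≤ √(r j) := Real.le_sqrt_of_sq_le (by norm_num; linarith)
      have h5 : 23 * √(r j) < t := by nlinarith
      have h6 : q j = Real.exp (-t) := by rw [ht, neg_neg, Real.exp_log q0]
      have h7 : Real.exp (-t) ≤ Real.exp (-(23 * √(r j))) := Real.exp_le_exp.2 (by linarith)
      have : 0 ≤ (if R < 2 * F then Real.exp (-T) else 0) := by split_ifs <;> positivity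
      nlinarith
    · push Not at hT
      have h1 : r j < 2 * F := by
        have : r j * (1 / F) < 16 / 9 := lt_of_le_of_lt (by gcongr) hgood
        rw [mul_one_div, div_lt_iff₀ hF] at this
        linarith
      rw [if_pos (lt_of_le_of_lt rj h1)]
      have : q j ≤ Real.exp (-T) := by
        rw [← Real.exp_log q0]; exact Real.exp_le_exp.2 (by linarith)
      nlinarith
  have hsum := Finset.sum_le_sum hterm
  rw [← Finset.mul_sum, Finset.sum_sub_distrib, Finset.sum_sub_distrib, Finset.sum_const,
    nsmul_eq_mul] at hsum
  -- `(20 √R) ^ 4 / 4! ≤ exp (20 √R)` turns the factor `exp (-20 √R)` into the decay `1 / R`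
  have hbad1 : ∑ j ∈ J, Real.exp (-(23 * √(r j))) ≤ 1 / (80 * R) := by
    have hs0 : 0 < √R := Real.sqrt_pos.2 (by linarith)
    have hE : Real.exp (-(20 * √R)) ≤ 1 / (7680 * R) := by
      rw [Real.exp_neg, inv_eq_one_div]
      refine one_div_le_one_div_of_le (by positivity) ?_
      have := Real.pow_div_factorial_le_exp (20 * √R) (by positivity) 4
      simp [Nat.factorial] at this
      have h4 : (20 * √R) ^ 4 = 160000 * R ^ 2 := by
        rw [show (20 * √R) ^ 4 = 160000 * (√R ^ 2) ^ 2 by ring, Real.sq_sqrt (by linarith)]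
      rw [h4] at this
      nlinarith
    calc _ ≤ ∑ j ∈ J, Real.exp (-(20 * √R)) * Real.exp (-(3 * √(r j))) := by
          refine Finset.sum_le_sum fun j hj => ?_
          rw [← Real.exp_add]
          have : √R ≤ √(r j) := Real.sqrt_le_sqrt (hr j hj)
          exact Real.exp_le_exp.2 (by linarith)
      _ = Real.exp (-(20 * √R)) * ∑ j ∈ J, Real.exp (-(3 * √(r j))) := by rw [Finset.mul_sum]
      _ ≤ 1 / (7680 * R) * 96 := by
          have : 0 ≤ ∑ j ∈ J, Real.exp (-(3 * √(r j))) :=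
            Finset.sum_nonneg fun _ _ => (Real.exp_pos _).le
          gcongr
      _ = 1 / (80 * R) := by field_simp; norm_num
  have hbad2 : (J.card : ℝ) * (if R < 2 * F then Real.exp (-T) else 0) ≤ e := by
    split_ifs with h
    · exact hη.trans (heη h)
    · simpa using he
  linarith

/-- The inequality `∑ q j * r j * g j ≥ 1` for a probability vector `q`. By `hpair` at most one index
`h` has `r h < 2`. Writing `ε = 1 - q h` and `s = 1 - 1 / r h`, either `ε ≥ 1 / 4` and the other indices
carry enough weight; or `s ≥ 2 ε` and the term of `h` suffices alone; or `r j ≥ 1 / s > 1 / (2 ε)` for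
all `j ≠ h`, so that among these the exceptional terms have total weight at most `ε / 20`. -/
theorem core_sum_ge {ι : Type*} (I : Finset ι) (q r g : ι → ℝ) (T F η : ℝ)
    (hq : ∀ j ∈ I, 0 < q j) (hq1 : ∑ j ∈ I, q j = 1)
    (hr : ∀ j ∈ I, 1 ≤ r j)
    (hpair : ∀ i ∈ I, ∀ j ∈ I, i ≠ j → (r i)⁻¹ + (r j)⁻¹ ≤ 1)
    (hT : 1 ≤ T) (hF : 1 ≤ F)
    (hg : ∀ j ∈ I, 1 / F ≤ g j)
    (hg' : ∀ j ∈ I, -Real.log (q j) ≤ T → 1 / (1 + (1 / 552) * (-Real.log (q j))) ^ 2 ≤ g j)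
    (hcount : ∑ j ∈ I, Real.exp (-(3 * √(r j))) ≤ 96)
    (hη : (I.card : ℝ) * Real.exp (-T) ≤ η) (hηF : η ≤ 1 / (160 * F)) :
    1 ≤ ∑ j ∈ I, q j * r j * g j := by
  classical
  have hF0 : 0 < F := by linarith
  have hη0 : 0 ≤ η := le_trans (by positivity) hη
  have hη1 : η ≤ 1 / 160 := hηF.trans (by
    apply one_div_le_one_div_of_le <;> linarith)
  have hqle : ∀ j ∈ I, q j ≤ 1 := fun j hj => hq1 ▸
    Finset.single_le_sum (fun i hi => (hq i hi).le) hj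
  have hgpos : ∀ j ∈ I, 0 < g j := fun j hj => lt_of_lt_of_le (by positivity) (hg j hj)
  by_cases hh : ∃ h ∈ I, r h < 2
  swap
  · push Not at hh
    have := light_sum_ge I q r g T F η 2 (1 / 160) hq hqle le_rfl hh hF0 hg hg' hcount hη
      (by norm_num) (fun _ => hη1)
    rw [hq1] at this
    linarith
  obtain ⟨h, hI, hr2⟩ := hh
  have hsub : I.erase h ⊆ I := erase_subset _ _
  have hq0 := hq h hI
  have hrh := hr h hI
  have hg0 := hgpos h hI
  have hsplit := Finset.add_sum_erase I (fun j => q j * r j * g j) hI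
  have hqsplit := Finset.add_sum_erase I q hI
  set ε := ∑ j ∈ I.erase h, q j with hε
  have hqε : q h = 1 - ε := by linarith
  set s := 1 - (r h)⁻¹ with hs
  have hinv : (r h)⁻¹ = 1 - s := by rw [hs]; ring
  have hinv2 : 1 / 2 < (r h)⁻¹ := by
    rw [← one_div]; exact one_div_lt_one_div_of_lt (by linarith) hr2
  have hinv1 : (r h)⁻¹ ≤ 1 := inv_le_one_of_one_le₀ hrh
  have hs0 : 0 ≤ s := by rw [hs]; linarith
  have hothers : ∀ j ∈ I.erase h, (r j)⁻¹ ≤ s := fun j hj => by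
    have := hpair h hI j (hsub hj) (ne_of_mem_erase hj).symm
    rw [hs]; linarith
  have hothers2 : ∀ j ∈ I.erase h, 2 ≤ r j := fun j hj => by
    have h1 := hothers j hj
    have h0 : 0 < r j := by linarith [hr j (hsub hj)]
    have : (r j)⁻¹ ≤ 1 / 2 := by rw [hs] at h1; linarith
    rw [inv_le_comm₀ h0 (by norm_num)] at this
    norm_num at this; exact this
  have hcount' : ∑ j ∈ I.erase h, Real.exp (-(3 * √(r j))) ≤ 96 :=
    (Finset.sum_le_sum_of_subset_of_nonneg hsub fun _ _ _ => (Real.exp_pos _).le).trans hcount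
  have hη' : ((I.erase h).card : ℝ) * Real.exp (-T) ≤ η := by
    refine le_trans ?_ hη
    have : ((I.erase h).card : ℝ) ≤ I.card := by exact_mod_cast card_le_card hsub
    gcongr
  have light := fun R e hR hr he heη => light_sum_ge (I.erase h) q r g T F η R e
    (fun j hj => hq j (hsub hj)) (fun j hj => hqle j (hsub hj)) hR hr hF0
    (fun j hj => hg j (hsub hj)) (fun j hj => hg' j (hsub hj)) hcount' hη' he heη
  have hε0 : 0 ≤ ε := Finset.sum_nonneg fun j hj => (hq j (hsub hj)).le
  -- `q log (1/q) ≤ 1 - q`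
  have hheavy : -Real.log (q h) ≤ T → 1 - ε - 1 / 276 * ε ≤ q h * g h := by
    intro hle
    have h1 := hg' h hI hle
    have hl0 : 0 ≤ -Real.log (q h) := by
      have := Real.log_nonpos hq0.le (hqle h hI); linarith
    have hl : q h * -Real.log (q h) ≤ ε := by
      have := Real.one_sub_inv_le_log_of_pos hq0
      have h2 : q h * (1 - (q h)⁻¹) ≤ q h * Real.log (q h) := by gcongr
      rw [mul_sub, mul_inv_cancel₀ hq0.ne'] at h2
      linarith
    set t := -Real.log (q h) with ht
    have h3 : 1 - 1 / 276 * t ≤ g h := by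
      refine le_trans ?_ h1
      rw [le_div_iff₀ (by positivity)]
      nlinarith [mul_nonneg hl0 hl0, mul_nonneg hl0 (mul_nonneg hl0 hl0)]
    nlinarith
  have hheavy' : q h * g h ≤ q h * r h * g h := by
    have := mul_pos hq0 hg0
    nlinarith
  rcases le_or_gt (1 / 4) ε with hcase | hcase
  · have := light 2 (1 / 160) le_rfl hothers2 (by norm_num) (fun _ => hη1)
    by_cases hle : -Real.log (q h) ≤ T
    · have := hheavy hle
      linarith
    · have h1 : q h ≤ η := by
        refine le_trans ?_ hη
        have : q h ≤ Real.exp (-T) := by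
          rw [← Real.exp_log hq0]; exact Real.exp_le_exp.2 (by linarith)
        have hc : (1 : ℝ) ≤ I.card := by exact_mod_cast card_pos.2 ⟨h, hI⟩
        nlinarith [Real.exp_pos (-T)]
      have : 0 ≤ q h * r h * g h := by positivity
      linarith
  · have hle : -Real.log (q h) ≤ T := by
      have := Real.one_sub_inv_le_log_of_pos hq0
      have h2 : (q h)⁻¹ ≤ 2 := by
        rw [inv_le_comm₀ hq0 (by norm_num)]; linarith
      linarith
    have hv := hheavy hle
    rcases le_or_gt (2 * ε) s with hs2 | hs2
    · have hr3 : 1 + s ≤ r h := by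
        have h1 : r h * (1 - s) = 1 := by rw [← hinv]; exact mul_inv_cancel₀ (by linarith)
        nlinarith
      have h4 : (1 - ε - 1 / 276 * ε) * (1 + 2 * ε) ≤ (q h * g h) * r h := by
        refine mul_le_mul hv (by linarith) (by linarith) (by positivity)
      have h5 : 0 ≤ ∑ j ∈ I.erase h, q j * r j * g j := Finset.sum_nonneg fun j hj => by
        have := hq j (hsub hj)
        have := hr j (hsub hj)
        have := hgpos j (hsub hj)
        positivity
      nlinarith
    · have hεpos : 0 < ε := by linarith
      have := light (1 / (2 * ε)) (ε / 40)
        (by rw [le_div_iff₀ (by positivity)]; linarith)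
        (fun j hj => by
          have h0 : 0 < r j := by linarith [hr j (hsub hj)]
          have h1 := hothers j hj
          rw [one_div, inv_le_comm₀ (by positivity) h0]
          linarith)
        (by positivity)
        (fun hlt => by
          rw [div_lt_iff₀ (by positivity)] at hlt
          refine hηF.trans ?_
          rw [div_le_iff₀ (by positivity)]
          linarith)
      have e1 : 1 / (80 * (1 / (2 * ε))) = ε / 40 := by field_simp; norm_num
      rw [e1] at this
      linarith

/-! ### The potential -/

/-- The function of `u` that is `1` up to `s`, has slope `1 / 552` on `[s, s + w]`, and is constant
afterwards. -/
noncomputable def ramp (s w u : ℝ) : ℝ := 1 + (1 / 552) * max 0 (min w (u - s))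

/-- The guaranteed gain `(∏ k, hom c k S) / |S|` as a function of `u = log |S|`. The ramps start at `0`,
`7 w`, `14 w`, so that consecutive ones are separated by flat stretches of length `6 w`. -/
noncomputable def pot (w u : ℝ) : ℝ := (ramp 0 w u * ramp (7 * w) w u * ramp (14 * w) w u) ^ 2

theorem one_le_ramp (s w u : ℝ) : 1 ≤ ramp s w u := by
  have := le_max_left 0 (min w (u - s))
  unfold ramp; linarith

theorem ramp_le {s w u : ℝ} (hw : 0 ≤ w) : ramp s w u ≤ 1 + (1 / 552) * w := by
  have : max 0 (min w (u - s)) ≤ w := max_le hw (min_le_left _ _)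
  unfold ramp; linarith

theorem ramp_of_le {s w u : ℝ} (h : u ≤ s) : ramp s w u = 1 := by
  have : max 0 (min w (u - s)) = 0 := max_eq_left ((min_le_right _ _).trans (by linarith))
  rw [ramp, this]; ring

theorem ramp_of_ge {s w u : ℝ} (hw : 0 ≤ w) (h : s + w ≤ u) : ramp s w u = 1 + (1 / 552) * w := by
  rw [ramp, min_eq_left (by linarith), max_eq_right hw]

theorem ramp_le_mul (s w : ℝ) {u v : ℝ} (h : u ≤ v) :
    ramp s w v ≤ (1 + (1 / 552) * (v - u)) * ramp s w u := by
  have h1 : max 0 (min w (v - s)) ≤ max 0 (min w (u - s)) + (v - u) := by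
    refine max_le (by linarith [le_max_left 0 (min w (u - s))]) ?_
    have : min w (v - s) ≤ min w (u - s) + (v - u) := by
      rw [← min_add_add_right]
      exact min_le_min (by linarith) (by linarith)
    linarith [le_max_right 0 (min w (u - s))]
  have h2 := le_max_left 0 (min w (u - s))
  unfold ramp
  nlinarith [mul_nonneg h2 (sub_nonneg.2 h)]

theorem one_le_pot (w u : ℝ) : 1 ≤ pot w u :=
  one_le_pow₀ (one_le_mul_of_one_le_of_one_le
    (one_le_mul_of_one_le_of_one_le (one_le_ramp _ _ _) (one_le_ramp _ _ _)) (one_le_ramp _ _ _))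

theorem pot_le {w : ℝ} (hw : 0 ≤ w) (u : ℝ) : pot w u ≤ (1 + (1 / 552) * w) ^ 6 := by
  have h : ∀ s, 0 ≤ ramp s w u := fun s => zero_le_one.trans (one_le_ramp _ _ _)
  have h1 := h 0
  have h2 := h (7 * w)
  have h3 := h (14 * w)
  calc pot w u ≤ ((1 + (1 / 552) * w) * (1 + (1 / 552) * w) * (1 + (1 / 552) * w)) ^ 2 := by
        unfold pot
        gcongr <;> exact ramp_le hw
    _ = _ := by ring

theorem pot_zero {w : ℝ} (hw : 0 ≤ w) : pot w 0 = 1 := by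
  rw [pot, ramp_of_le le_rfl, ramp_of_le (by linarith), ramp_of_le (by linarith)]; norm_num

theorem pot_end {w : ℝ} (hw : 0 ≤ w) : pot w (15 * w) = (1 + (1 / 552) * w) ^ 6 := by
  rw [pot, ramp_of_ge hw (by linarith), ramp_of_ge hw (by linarith), ramp_of_ge hw (by linarith)]
  ring

/-- An interval of length at most `6 w` meets at most one of the three ramps, so only one factor of
`pot` changes. -/
theorem pot_le_mul {w u v : ℝ} (hw : 0 ≤ w) (huv : u ≤ v) (hvu : v - u ≤ 6 * w) :
    pot w v ≤ (1 + (1 / 552) * (v - u)) ^ 2 * pot w u := by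
  have h : ∀ s x, 0 ≤ ramp s w x := fun s x => zero_le_one.trans (one_le_ramp _ _ _)
  rw [pot, pot, ← mul_pow]
  refine pow_le_pow_left₀ (mul_nonneg (mul_nonneg (h _ _) (h _ _)) (h _ _)) ?_ 2
  have k1 := ramp_le_mul 0 w huv
  have k2 := ramp_le_mul (7 * w) w huv
  have k3 := ramp_le_mul (14 * w) w huv
  rcases le_or_gt v (7 * w) with h7 | h7
  · rw [ramp_of_le h7, ramp_of_le (show v ≤ 14 * w by linarith), ramp_of_le (huv.trans h7),
      ramp_of_le (show u ≤ 14 * w by linarith)]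
    simpa using k1
  rw [ramp_of_ge (s := 0) (u := v) hw (by linarith), ramp_of_ge (s := 0) (u := u) hw (by linarith)]
  have hp : 0 ≤ 1 + (1 / 552) * w := by linarith
  rcases le_or_gt v (14 * w) with h14 | h14
  · rw [ramp_of_le h14, ramp_of_le (huv.trans h14)]
    nlinarith
  · rw [ramp_of_ge (s := 7 * w) (u := v) hw (by linarith),
      ramp_of_ge (s := 7 * w) (u := u) hw (by linarith)]
    nlinarith [mul_nonneg hp hp]

/-! ### Gallai partitions -/

/-- No triangle has three pairwise distinct colours, for colourings of an arbitrary vertex type. -/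
def NoRainbow {V : Type*} (c : Sym2 V → Fin 3) : Prop :=
  ∀ x y z, x ≠ y → y ≠ z → x ≠ z → c s(x, y) = c s(y, z) ∨ c s(y, z) = c s(x, z) ∨
    c s(x, y) = c s(x, z)

/-- The graph of the edges of colour `i` inside `S`. It lives on the whole vertex type, and vertices
outside `S` are isolated. -/
def colourGraph {V : Type*} (c : Sym2 V → Fin 3) (i : Fin 3) (S : Finset V) : SimpleGraph V where
  Adj x y := x ≠ y ∧ x ∈ S ∧ y ∈ S ∧ c s(x, y) = i
  symm := ⟨fun _ _ h => ⟨h.1.symm, h.2.2.1, h.2.1, Sym2.eq_swap ▸ h.2.2.2⟩⟩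
  loopless := ⟨fun _ h => h.1 rfl⟩

section
variable {V : Type*} {c : Sym2 V → Fin 3} {i : Fin 3} {S : Finset V}

theorem colour_ne_of_not_reachable {x y : V} (hx : x ∈ S) (hy : y ∈ S)
    (h : ¬ (colourGraph c i S).Reachable x y) : c s(x, y) ≠ i := fun e => by
  by_cases hxy : x = y
  · exact h (hxy ▸ SimpleGraph.Reachable.refl _)
  · exact h (SimpleGraph.Adj.reachable ⟨hxy, hx, hy, e⟩)

/-- A vertex outside an `i`-component sends edges of a single colour to that component. -/
theorem colour_eq_of_reachable (hc : NoRainbow c) {x x' y : V} (hy : y ∈ S)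
    (hxx' : (colourGraph c i S).Reachable x x') (h : ¬ (colourGraph c i S).Reachable x y) :
    c s(x, y) = c s(x', y) := by
  rw [SimpleGraph.reachable_iff_reflTransGen] at hxx'
  induction hxx' with
  | refl => rfl
  | @tail b d hb hbd ih =>
    rw [ih]
    have hxb : (colourGraph c i S).Reachable x b :=
      (SimpleGraph.reachable_iff_reflTransGen _ _).2 hb
    have hby : ¬ (colourGraph c i S).Reachable b y := fun h' => h (hxb.trans h')
    have hdy : ¬ (colourGraph c i S).Reachable d y := fun h' =>
      hby ((SimpleGraph.Adj.reachable hbd).trans h')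
    obtain ⟨hne, hbS, hdS, e⟩ := hbd
    have n1 := colour_ne_of_not_reachable hbS hy hby
    have n2 := colour_ne_of_not_reachable hdS hy hdy
    have n3 : b ≠ y := fun h => hby (h ▸ SimpleGraph.Reachable.refl _)
    have n4 : d ≠ y := fun h => hdy (h ▸ SimpleGraph.Reachable.refl _)
    rcases hc b d y hne n4 n3 with h | h | h
    · exact absurd (h.symm.trans e) n2
    · exact h.symm
    · exact absurd (h.symm.trans e) n1

/-- Gallai: some colour class is disconnected on `S`. In the induction step a vertex `v` is added to
`S`, on which colour `i` is disconnected. If all colours became connected, `v` would send colour `i` to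
every `i`-component and each of the two other colours to some vertex, and both of these would have to
be the colour of one and the same edge between two `i`-components. -/
theorem exists_disconnected [DecidableEq V] (hc : NoRainbow c) (S : Finset V) (hS : 2 ≤ S.card) :
    ∃ i, ∃ x ∈ S, ∃ y ∈ S, ¬ (colourGraph c i S).Reachable x y := by
  induction S using Finset.induction_on with
  | empty => simp at hS
  | insert v S hv ih =>
    rw [card_insert_of_notMem hv] at hS
    rcases Nat.lt_or_ge S.card 2 with h1 | h1
    · obtain ⟨u, rfl⟩ := card_eq_one.1 (show S.card = 1 by omega)
      have hvu : v ≠ u := by simpa using hv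
      obtain ⟨i, hi⟩ : ∃ i : Fin 3, c s(v, u) ≠ i := ⟨c s(v, u) + 1, by
        generalize c s(v, u) = k; revert k; decide⟩
      refine ⟨i, v, by simp, u, by simp, fun h => ?_⟩
      rw [SimpleGraph.reachable_iff_reflTransGen] at h
      rcases h.cases_head with h | ⟨z, ⟨hne, _, hz, e⟩, _⟩
      · exact hvu h
      · have : z = u := by simpa [hne.symm] using hz
        exact hi (this ▸ e)
    obtain ⟨i, x, hx, y, hy, hxy⟩ := ih h1
    by_contra hcon
    push Not at hcon
    -- every `i`-component of `S` is joined to `v` in colour `i`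
    have hA : ∀ u ∈ S, ∃ w ∈ S, (colourGraph c i S).Reachable u w ∧ c s(v, w) = i := by
      intro u hu
      have hr := hcon i v (mem_insert_self _ _) u (mem_insert_of_mem hu)
      rw [SimpleGraph.reachable_iff_reflTransGen] at hr
      have key : ∀ z, Relation.ReflTransGen (colourGraph c i (insert v S)).Adj v z →
          z = v ∨ z ∈ S ∧ ∃ w ∈ S, (colourGraph c i S).Reachable z w ∧ c s(v, w) = i := by
        intro z hz
        induction hz with
        | refl => exact Or.inl rfl
        | @tail b d _ hbd ih =>
          obtain ⟨hne, hb, hd, e⟩ := hbd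
          rcases mem_insert.1 hd with rfl | hdS
          · exact Or.inl rfl
          refine Or.inr ⟨hdS, ?_⟩
          rcases ih with rfl | ⟨hbS, w, hw, hbw, ew⟩
          · exact ⟨d, hdS, SimpleGraph.Reachable.refl _, e⟩
          · refine ⟨w, hw, SimpleGraph.Reachable.trans (SimpleGraph.Adj.reachable ?_) hbw, ew⟩
            exact SimpleGraph.Adj.symm ⟨hne, hbS, hdS, e⟩
      rcases key u hr with rfl | ⟨_, h⟩
      · exact absurd hu hv
      · exact h
    have hB : ∀ k, ∃ z ∈ S, c s(v, z) = k := by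
      intro k
      have hr := hcon k v (mem_insert_self _ _) x (mem_insert_of_mem hx)
      rw [SimpleGraph.reachable_iff_reflTransGen] at hr
      rcases hr.cases_head with h | ⟨z, ⟨hne, _, hz, e⟩, _⟩
      · exact absurd hx (h ▸ hv)
      · exact ⟨z, (mem_insert.1 hz).resolve_left hne.symm, e⟩
    -- a non-`i` colour at `z` propagates to all edges leaving the `i`-component of `z`
    have hC : ∀ z ∈ S, c s(v, z) ≠ i → ∀ u ∈ S, ¬ (colourGraph c i S).Reachable z u →
        c s(z, u) = c s(v, z) := by
      intro z hz hzi u hu hzu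
      obtain ⟨w, hw, huw, ew⟩ := hA u hu
      have hzw : ¬ (colourGraph c i S).Reachable z w := fun h => hzu (h.trans huw.symm)
      have e1 : c s(z, u) = c s(z, w) := by
        have := colour_eq_of_reachable hc hz huw (fun h => hzu h.symm)
        rwa [Sym2.eq_swap, Sym2.eq_swap (a := w)] at this
      rw [e1]
      have n1 := colour_ne_of_not_reachable hz hw hzw
      have n2 : z ≠ w := fun h => hzw (h ▸ SimpleGraph.Reachable.refl _)
      rcases hc v z w (fun h => hv (h ▸ hz)) n2 (fun h => hv (h ▸ hw)) with h | h | h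
      · exact h.symm
      · exact absurd (h.trans ew) n1
      · exact absurd (h.trans ew) hzi
    obtain ⟨z, hz, ez⟩ := hB (i + 1)
    obtain ⟨z', hz', ez'⟩ := hB (i + 2)
    have d1 : i + 1 ≠ i := by clear * -; revert i; decide
    have d2 : i + 2 ≠ i := by clear * -; revert i; decide
    have d3 : i + 1 ≠ i + 2 := by clear * -; revert i; decide
    by_cases hzz' : (colourGraph c i S).Reachable z z'
    · obtain ⟨u, hu, hzu⟩ : ∃ u ∈ S, ¬ (colourGraph c i S).Reachable z u := by
        by_contra hall
        push Not at hall
        exact hxy ((hall x hx).symm.trans (hall y hy))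
      have e1 := hC z hz (ez ▸ d1) u hu hzu
      have e2 := hC z' hz' (ez' ▸ d2) u hu (fun h => hzu (hzz'.trans h))
      have e3 := colour_eq_of_reachable hc hu hzz' hzu
      exact d3 (by rw [← ez, ← ez', ← e1, ← e2, e3])
    · have e1 := hC z hz (ez ▸ d1) z' hz' hzz'
      have e2 := hC z' hz' (ez' ▸ d2) z hz (fun h => hzz' h.symm)
      exact d3 (by rw [← ez, ← ez', ← e1, ← e2, Sym2.eq_swap])

/-- The blocks in `I` are the components of a disconnected colour `i`. -/
theorem exists_gallai_partition [DecidableEq V] (hc : NoRainbow c) (S : Finset V)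
    (hS : 2 ≤ S.card) :
    ∃ i : Fin 3, ∃ I : Finset (Finset V), (∀ D ∈ I, D.Nonempty ∧ D ⊂ S) ∧
      (I : Set (Finset V)).PairwiseDisjoint id ∧ I.biUnion id = S ∧
      ∀ D ∈ I, ∀ E ∈ I, D ≠ E → ∃ k, k ≠ i ∧ ∀ x ∈ D, ∀ y ∈ E, c s(x, y) = k := by
  classical
  obtain ⟨i, x₀, hx₀, y₀, hy₀, hxy₀⟩ := exists_disconnected hc S hS
  set G := colourGraph c i S with hG
  have hmem : ∀ D ∈ S.image (fun x => S.filter (G.Reachable x)),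
      ∃ x ∈ S, D = S.filter (G.Reachable x) := fun D hD => by
    obtain ⟨x, hx, rfl⟩ := mem_image.1 hD; exact ⟨x, hx, rfl⟩
  have heq : ∀ x y, G.Reachable x y → S.filter (G.Reachable x) = S.filter (G.Reachable y) :=
    fun x y h => filter_congr fun z _ => ⟨fun h' => h.symm.trans h', fun h' => h.trans h'⟩
  refine ⟨i, S.image (fun x => S.filter (G.Reachable x)), ?_, ?_, ?_, ?_⟩
  · intro D hD
    obtain ⟨x, hx, rfl⟩ := hmem D hD
    refine ⟨⟨x, mem_filter.2 ⟨hx, SimpleGraph.Reachable.refl _⟩⟩, filter_ssubset.2 ?_⟩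
    by_contra hall
    push Not at hall
    exact hxy₀ ((hall x₀ hx₀).symm.trans (hall y₀ hy₀))
  · intro D hD E hE hne
    obtain ⟨x, hx, rfl⟩ := hmem D hD
    obtain ⟨y, hy, rfl⟩ := hmem E hE
    refine disjoint_left.2 fun z hz hz' => hne (heq x y ?_)
    exact (mem_filter.1 hz).2.trans (mem_filter.1 hz').2.symm
  · ext z
    simp only [mem_biUnion, mem_image, id]
    constructor
    · rintro ⟨_, ⟨x, hx, rfl⟩, hz⟩
      exact (mem_filter.1 hz).1
    · intro hz
      exact ⟨_, ⟨z, hz, rfl⟩, mem_filter.2 ⟨hz, SimpleGraph.Reachable.refl _⟩⟩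
  · intro D hD E hE hne
    obtain ⟨x, hx, rfl⟩ := hmem D hD
    obtain ⟨y, hy, rfl⟩ := hmem E hE
    have hxy : ¬ G.Reachable x y := fun h => hne (heq x y h)
    refine ⟨c s(x, y), colour_ne_of_not_reachable hx hy hxy, fun x' hx' y' hy' => ?_⟩
    obtain ⟨hx'S, hxx'⟩ := mem_filter.1 hx'
    obtain ⟨hy'S, hyy'⟩ := mem_filter.1 hy'
    rw [colour_eq_of_reachable hc hy hxx' hxy, Sym2.eq_swap, Sym2.eq_swap (b := y)]
    exact (colour_eq_of_reachable hc hx'S hyy' (fun h => hxy (hxx'.trans h.symm))).symm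

end

/-! ### Induction along Gallai partitions -/

section
variable {V : Type*} [DecidableEq V]

/-- The largest size of a subset of `S` on which colour `k` does not appear. -/
def hom (c : Sym2 V → Fin 3) (k : Fin 3) (S : Finset V) : ℕ :=
  (S.powerset.filter fun X => ∀ x ∈ X, ∀ y ∈ X, x ≠ y → c s(x, y) ≠ k).sup card

theorem card_le_hom {c : Sym2 V → Fin 3} {k : Fin 3} {S X : Finset V} (hX : X ⊆ S)
    (h : ∀ x ∈ X, ∀ y ∈ X, x ≠ y → c s(x, y) ≠ k) : X.card ≤ hom c k S := by
  exact Finset.le_sup (f := card) (mem_filter.2 ⟨mem_powerset.2 hX, h⟩)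

theorem exists_card_eq_hom (c : Sym2 V → Fin 3) (k : Fin 3) (S : Finset V) :
    ∃ X ⊆ S, (∀ x ∈ X, ∀ y ∈ X, x ≠ y → c s(x, y) ≠ k) ∧ X.card = hom c k S := by
  obtain ⟨X, hX, e⟩ := Finset.exists_mem_eq_sup
    (S.powerset.filter fun X => ∀ x ∈ X, ∀ y ∈ X, x ≠ y → c s(x, y) ≠ k)
    ⟨∅, by simp⟩ card
  rw [mem_filter, mem_powerset] at hX
  exact ⟨X, hX.1, hX.2, e.symm⟩

theorem one_le_hom (c : Sym2 V → Fin 3) (k : Fin 3) {S : Finset V} (hS : S.Nonempty) :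
    1 ≤ hom c k S := by
  obtain ⟨x, hx⟩ := hS
  have := card_le_hom (c := c) (k := k) (S := S) (X := {x}) (by simpa using hx)
    (fun a ha b hb hab => absurd ((mem_singleton.1 ha).trans (mem_singleton.1 hb).symm) hab)
  simpa using this

/-- Optimal sets in disjoint blocks can be united if colour `k` is absent between the blocks. -/
theorem sum_hom_le (c : Sym2 V → Fin 3) (k : Fin 3) {S : Finset V} (J : Finset (Finset V))
    (hJ : ∀ D ∈ J, D ⊆ S) (hd : (J : Set (Finset V)).PairwiseDisjoint id)
    (h : ∀ D ∈ J, ∀ E ∈ J, D ≠ E → ∀ x ∈ D, ∀ y ∈ E, c s(x, y) ≠ k) :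
    ∑ D ∈ J, hom c k D ≤ hom c k S := by
  choose X hXD hX hcard using exists_card_eq_hom c k
  have hdisj : (J : Set (Finset V)).PairwiseDisjoint X :=
    hd.mono_on fun D _ => hXD D
  rw [← Finset.sum_congr rfl fun D _ => hcard D, ← card_biUnion hdisj]
  refine card_le_hom (biUnion_subset.2 fun D hD => (hXD D).trans (hJ D hD)) ?_
  intro x hx y hy hxy
  obtain ⟨D, hD, hxD⟩ := mem_biUnion.1 hx
  obtain ⟨E, hE, hyE⟩ := mem_biUnion.1 hy
  by_cases hDE : D = E
  · subst hDE
    exact hX D x hxD y hyE hxy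
  · exact h D hD E hE hDE x (hXD D hxD) y (hXD E hyE)

theorem prod_three_rotate (f : Fin 3 → ℝ) (i : Fin 3) :
    ∏ k, f k = f i * f (i + 1) * f (i + 2) := by
  rw [Fin.prod_univ_three]
  fin_cases i
  · rfl
  · change _ = f 1 * f 2 * f 0; ring
  · change _ = f 2 * f 0 * f 1; ring

/-- The main induction. The bound `M` on the sets avoiding a colour only enters through the number of
blocks of a partition, which is at most `hom c i S`. -/
theorem card_mul_pot_le {c : Sym2 V → Fin 3} (hc : NoRainbow c) {w M : ℝ} (hw : 1 ≤ 6 * w)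
    (hM : M * Real.exp (-(6 * w)) ≤ 1 / (160 * (1 + (1 / 552) * w) ^ 6))
    (S : Finset V) (hS : S.Nonempty) (hSM : ∀ k, (hom c k S : ℝ) ≤ M) :
    (S.card : ℝ) * pot w (Real.log S.card) ≤ ∏ k, (hom c k S : ℝ) := by
  induction S using Finset.strongInduction with
  | H S ih =>
  have hw0 : 0 ≤ w := by linarith
  rcases Nat.lt_or_ge S.card 2 with h1 | h1
  · have : S.card = 1 := by have := hS.card_pos; omega
    rw [this, Nat.cast_one, Real.log_one, pot_zero hw0, one_mul, Fin.prod_univ_three]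
    have hk : ∀ k, (1 : ℝ) ≤ hom c k S := fun k => by exact_mod_cast one_le_hom c k hS
    exact one_le_mul_of_one_le_of_one_le (one_le_mul_of_one_le_of_one_le (hk _) (hk _)) (hk _)
  obtain ⟨i, I, hI, hdisj, hunion, hcol⟩ := exists_gallai_partition hc S h1
  have hsub : ∀ D ∈ I, D ⊆ S := fun D hD => (hI D hD).2.subset
  have hcard : ∑ D ∈ I, (D.card : ℝ) = S.card := by
    rw [← hunion, card_biUnion hdisj]; simp
  have hmono : ∀ k, ∀ D ∈ I, hom c k D ≤ hom c k S := fun k D hD => by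
    obtain ⟨X, hX, hX', e⟩ := exists_card_eq_hom c k D
    exact e ▸ card_le_hom (hX.trans (hsub D hD)) hX'
  have hpos : ∀ k, ∀ D ∈ I, (1 : ℝ) ≤ hom c k D := fun k D hD => by
    exact_mod_cast one_le_hom c k (hI D hD).1
  have hposS : ∀ k, (1 : ℝ) ≤ hom c k S := fun k => by exact_mod_cast one_le_hom c k hS
  have hsum : ∀ k, ∀ J ⊆ I, (∀ D ∈ J, ∀ E ∈ J, D ≠ E → ∀ x ∈ D, ∀ y ∈ E, c s(x, y) ≠ k) →
      ∑ D ∈ J, (hom c k D : ℝ) ≤ hom c k S := fun k J hJ h => by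
    exact_mod_cast sum_hom_le c k J (fun D hD => hsub D (hJ hD)) (hdisj.subset hJ) h
  -- `R` says that the edges between two blocks have colour `i + 1`
  set R : Finset V → Finset V → Prop := fun D E => ∃ x ∈ D, ∃ y ∈ E, c s(x, y) = i + 1 with hR
  have hRsymm : ∀ D E, R D E → R E D := by
    rintro D E ⟨x, hx, y, hy, e⟩
    exact ⟨y, hy, x, hx, Sym2.eq_swap ▸ e⟩
  have hnei : ∀ D ∈ I, ∀ E ∈ I, D ≠ E → ∀ x ∈ D, ∀ y ∈ E, c s(x, y) ≠ i := by
    intro D hD E hE hne x hx y hy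
    obtain ⟨k, hk, h⟩ := hcol D hD E hE hne
    exact h x hx y hy ▸ hk
  have hRcol : ∀ D ∈ I, ∀ E ∈ I, D ≠ E → R D E → ∀ x ∈ D, ∀ y ∈ E, c s(x, y) ≠ i + 2 := by
    rintro D hD E hE hne ⟨x', hx', y', hy', e⟩ x hx y hy
    obtain ⟨k, hk, h⟩ := hcol D hD E hE hne
    rw [h x hx y hy, ← h x' hx' y' hy', e]
    clear * -; revert i; decide
  have hRcol' : ∀ D ∈ I, ∀ E ∈ I, D ≠ E → ¬ R D E → ∀ x ∈ D, ∀ y ∈ E, c s(x, y) ≠ i + 1 :=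
    fun D _ E _ _ hn x hx y hy e => hn ⟨x, hx, y, hy, e⟩
  set A : ℝ := ((hom c i S : ℕ) : ℝ) with hA
  set B : ℝ := ((hom c (i + 2) S : ℕ) : ℝ) with hB
  set C : ℝ := ((hom c (i + 1) S : ℕ) : ℝ) with hC
  set ℓ : ℝ := (S.card : ℝ) with hℓ
  have hℓ0 : 0 < ℓ := by rw [hℓ]; exact_mod_cast hS.card_pos
  have hB1 := hposS (i + 2)
  have hC1 := hposS (i + 1)
  have hA1 := hposS i
  set X : Finset V → ℝ := fun D => B / hom c (i + 2) D with hX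
  set Y : Finset V → ℝ := fun D => C / hom c (i + 1) D with hY
  have hX1 : ∀ D ∈ I, 1 ≤ X D := fun D hD => by
    have := hpos (i + 2) D hD
    rw [hX, one_le_div (by linarith)]
    exact Nat.cast_le.2 (hmono (i + 2) D hD)
  have hY1 : ∀ D ∈ I, 1 ≤ Y D := fun D hD => by
    have := hpos (i + 1) D hD
    rw [hY, one_le_div (by linarith)]
    exact Nat.cast_le.2 (hmono (i + 1) D hD)
  have hcl : ∀ J ⊆ I, (J : Set (Finset V)).Pairwise R → ∑ D ∈ J, (X D)⁻¹ ≤ 1 := by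
    intro J hJ hp
    have := hsum (i + 2) J hJ fun D hD E hE hne =>
      hRcol D (hJ hD) E (hJ hE) hne (hp hD hE hne)
    simp only [hX, inv_div]
    rw [← Finset.sum_div, div_le_one (by linarith)]
    exact this
  have hcl' : ∀ J ⊆ I, (J : Set (Finset V)).Pairwise (fun D E => ¬ R D E) →
      ∑ D ∈ J, (Y D)⁻¹ ≤ 1 := by
    intro J hJ hp
    have := hsum (i + 1) J hJ fun D hD E hE hne =>
      hRcol' D (hJ hD) E (hJ hE) hne (hp hD hE hne)
    simp only [hY, inv_div]
    rw [← Finset.sum_div, div_le_one (by linarith)]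
    exact this
  have hcount := sum_exp_neg_le R hRsymm I X Y hX1 hY1 hcl hcl'
  have hDpos : ∀ D ∈ I, (0 : ℝ) < D.card := fun D hD => by exact_mod_cast (hI D hD).1.card_pos
  have hpot0 : ∀ u, 0 < pot w u := fun u => zero_lt_one.trans_le (one_le_pot w u)
  have hsumA := hsum i I subset_rfl hnei
  have hIcard : (I.card : ℝ) ≤ M := by
    refine le_trans ?_ (hsumA.trans (hSM i))
    rw [← nsmul_one, ← Finset.sum_const]
    exact Finset.sum_le_sum fun D hD => hpos i D hD
  have hcore := core_sum_ge I (fun D => (D.card : ℝ) / ℓ) (fun D => X D * Y D)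
    (fun D => pot w (Real.log D.card) / pot w (Real.log ℓ)) (6 * w) ((1 + (1 / 552) * w) ^ 6)
    (M * Real.exp (-(6 * w))) (fun D hD => div_pos (hDpos D hD) hℓ0)
    (by rw [← Finset.sum_div, hcard, div_self hℓ0.ne'])
    (fun D hD => one_le_mul_of_one_le_of_one_le (hX1 D hD) (hY1 D hD))
    (by
      intro D hD E hE hne
      have hpsub : ({D, E} : Finset (Finset V)) ⊆ I := by
        intro z hz
        rcases mem_insert.1 hz with rfl | hz
        · exact hD
        · exact mem_singleton.1 hz ▸ hE
      have xD := hX1 D hD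
      have yD := hY1 D hD
      have xE := hX1 E hE
      have yE := hY1 E hE
      have ix : ∀ {x y : ℝ}, 1 ≤ x → 1 ≤ y → (x * y)⁻¹ ≤ x⁻¹ ∧ (x * y)⁻¹ ≤ y⁻¹ := by
        intro x y hx hy
        constructor
        · exact inv_anti₀ (by linarith) (by nlinarith)
        · exact inv_anti₀ (by linarith) (by nlinarith)
      by_cases hRDE : R D E
      · have := hcl {D, E} hpsub (by
          rw [coe_pair]
          exact Set.pairwise_pair.2 fun _ => ⟨hRDE, hRsymm _ _ hRDE⟩)
        rw [sum_pair hne] at this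
        linarith [(ix xD yD).1, (ix xE yE).1]
      · have := hcl' {D, E} hpsub (by
          rw [coe_pair]
          exact Set.pairwise_pair.2 fun _ => ⟨hRDE, fun h => hRDE (hRsymm _ _ h)⟩)
        rw [sum_pair hne] at this
        linarith [(ix xD yD).2, (ix xE yE).2])
    hw (one_le_pow₀ (by linarith))
    (fun D hD => div_le_div₀ (hpot0 _).le (one_le_pot _ _) (hpot0 _) (pot_le hw0 _))
    (by
      intro D hD hle
      rw [Real.log_div (hDpos D hD).ne' hℓ0.ne'] at hle ⊢
      have hlog : Real.log D.card ≤ Real.log ℓ :=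
        Real.log_le_log (hDpos D hD) (by rw [hℓ]; exact_mod_cast card_le_card (hsub D hD))
      have := pot_le_mul hw0 hlog (by linarith)
      have hp : 0 < 1 + 1 / 552 * -(Real.log D.card - Real.log ℓ) := by linarith
      rw [div_le_div_iff₀ (by positivity) (hpot0 _), one_mul, mul_comm]
      rw [neg_sub]
      exact this)
    hcount (by gcongr) hM
  calc ℓ * pot w (Real.log ℓ)
      ≤ ℓ * pot w (Real.log ℓ) * ∑ D ∈ I, (D.card : ℝ) / ℓ * (X D * Y D) *
          (pot w (Real.log D.card) / pot w (Real.log ℓ)) :=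
        le_mul_of_one_le_right (mul_pos hℓ0 (hpot0 _)).le hcore
    _ = ∑ D ∈ I, (D.card : ℝ) * pot w (Real.log D.card) * (X D * Y D) := by
        rw [Finset.mul_sum]
        refine Finset.sum_congr rfl fun D _ => ?_
        have := hpot0 (Real.log ℓ)
        field_simp
    _ ≤ ∑ D ∈ I, (hom c i D : ℝ) * (C * B) := by
        refine Finset.sum_le_sum fun D hD => ?_
        have hDS := (hI D hD).2
        have h := ih D hDS (hI D hD).1 fun k =>
          le_trans (by exact_mod_cast hmono k D hD) (hSM k)
        rw [prod_three_rotate _ i] at h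
        have p1 := hpos (i + 1) D hD
        have p2 := hpos (i + 2) D hD
        have hXY : 0 ≤ X D * Y D := by
          have := hX1 D hD
          have := hY1 D hD
          positivity
        refine (mul_le_mul_of_nonneg_right h hXY).trans (le_of_eq ?_)
        simp only [hX, hY]
        field_simp
    _ = (∑ D ∈ I, (hom c i D : ℝ)) * (C * B) := by rw [Finset.sum_mul]
    _ ≤ A * (C * B) := by gcongr
    _ = ∏ k, (hom c k S : ℝ) := by rw [prod_three_rotate _ i]; ring

end

/-! ### Asymptotics -/

theorem eventually_large : ∃ N : ℕ, ∀ n : ℕ, N ≤ n →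
    15 ≤ Real.log n ∧ Real.log n ^ 8 ≤ Real.exp (Real.log n / 15) := by
  have h1 := (isLittleO_pow_exp_pos_mul_atTop 8 (show (0 : ℝ) < 1 / 15 by norm_num)).bound
    (show (0 : ℝ) < 1 by norm_num)
  have h2 := (h1.and (Filter.eventually_ge_atTop (15 : ℝ)))
  have h3 := (Real.tendsto_log_atTop.comp tendsto_natCast_atTop_atTop).eventually h2
  obtain ⟨N, hN⟩ := Filter.eventually_atTop.1 h3
  refine ⟨N, fun n hn => ?_⟩
  obtain ⟨h, h'⟩ := hN n hn
  simp only [Function.comp_apply] at h h'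
  refine ⟨h', ?_⟩
  rw [Real.norm_of_nonneg (by positivity), Real.norm_of_nonneg (Real.exp_pos _).le, one_mul] at h
  rwa [div_eq_inv_mul, ← one_div]

theorem stmt5 :
    ∃ κ : ℝ, 0 < κ ∧ ∃ N : ℕ, ∀ n : ℕ, N ≤ n →
      ∀ c : Sym2 (Fin n) → Fin 3, ¬ HasRainbowTriangle c →
        ∃ X : Finset (Fin n), IsHomog c X ∧
          κ * (n : ℝ) ^ ((1 : ℝ) / 3) * (Real.logb 2 n) ^ 2 ≤ (X.card : ℝ) := by
  have hlog2 : 0 < Real.log 2 := Real.log_pos (by norm_num)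
  obtain ⟨N, hN⟩ := eventually_large
  -- `8280 = 552 * 15`, so that `M ^ 3 = n * (log n / 8280) ^ 6` is just below `n * pot w (log n)`
  refine ⟨(Real.log 2 / 8280) ^ 2, by positivity, N, fun n hn c hrain => ?_⟩
  obtain ⟨hL, hexp⟩ := hN n hn
  have hc : NoRainbow c := by
    intro x y z hxy hyz hxz
    by_contra hcon
    push Not at hcon
    exact hrain ⟨x, y, z, hxy, hyz, hxz, hcon.1, hcon.2.1, hcon.2.2⟩
  have hn0 : (0 : ℝ) < n := by
    rcases Nat.eq_zero_or_pos n with rfl | h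
    · norm_num at hL
    · exact_mod_cast h
  set L := Real.log n with hLdef
  set M : ℝ := (Real.log 2 / 8280) ^ 2 * (n : ℝ) ^ ((1 : ℝ) / 3) * (Real.logb 2 n) ^ 2 with hM
  have hMeq : M = Real.exp (L / 3) * (L / 8280) ^ 2 := by
    rw [hM, Real.logb, Real.rpow_def_of_pos hn0, ← hLdef, mul_one_div]
    field_simp
  by_contra hcon
  push Not at hcon
  have hsmall : ∀ k, (hom c k univ : ℝ) < M := fun k => by
    obtain ⟨X, _, hX, e⟩ := exists_card_eq_hom c k univ
    rw [← e]
    exact hcon X ⟨k, hX⟩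
  have hmain := card_mul_pot_le hc (w := L / 15) (M := M) (by linarith)
    (by
      rw [hMeq, le_div_iff₀ (by positivity)]
      have e1 : Real.exp (L / 3) * Real.exp (-(6 * (L / 15))) = Real.exp (-(L / 15)) := by
        rw [← Real.exp_add]; ring_nf
      have e2 : (1 + 1 / 552 * (L / 15)) ^ 6 ≤ L ^ 6 := by gcongr; linarith
      have e3 : Real.exp (-(L / 15)) * L ^ 8 ≤ 1 := by
        rw [Real.exp_neg, inv_mul_le_iff₀ (Real.exp_pos _), mul_one]; exact hexp
      calc _ = Real.exp (L / 3) * Real.exp (-(6 * (L / 15))) * ((L / 8280) ^ 2 *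
              (160 * (1 + 1 / 552 * (L / 15)) ^ 6)) := by ring
        _ ≤ Real.exp (-(L / 15)) * ((L / 8280) ^ 2 * (160 * L ^ 6)) := by rw [e1]; gcongr
        _ = Real.exp (-(L / 15)) * L ^ 8 * (160 / 8280 ^ 2) := by ring
        _ ≤ 1 * (160 / 8280 ^ 2) := by gcongr
        _ ≤ 1 := by norm_num)
    (univ : Finset (Fin n))
    (by
      have : 0 < n := by exact_mod_cast hn0
      exact ⟨⟨0, this⟩, mem_univ _⟩)
    (fun k => (hsmall k).le)
  rw [card_univ, Fintype.card_fin, ← hLdef, show pot (L / 15) L = pot (L / 15) (15 * (L / 15)) by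
    congr 1; ring, pot_end (by linarith)] at hmain
  have hprod : ∏ k, (hom c k univ : ℝ) ≤ M ^ 3 := by
    calc _ ≤ ∏ _k : Fin 3, M :=
          Finset.prod_le_prod (fun _ _ => Nat.cast_nonneg _) fun k _ => (hsmall k).le
      _ = M ^ 3 := by simp
  have hM3 : M ^ 3 = n * (L / 8280) ^ 6 := by
    rw [hMeq, mul_pow, ← Real.exp_nat_mul, show ((3 : ℕ) : ℝ) * (L / 3) = L by push_cast; ring,
      hLdef, Real.exp_log hn0]
    ring
  have hlt : (L / 8280) ^ 6 < (1 + 1 / 552 * (L / 15)) ^ 6 :=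
    pow_lt_pow_left₀ (by linarith) (by positivity) (by norm_num)
  have := mul_lt_mul_of_pos_left hlt hn0
  linarith
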